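/- Under the hypotheses (H1)–(H3) on the pressure P, with k(ρ) = ∫₀^ρ √(P'(y))/y dy, λ₁ = (3−γ₁)/(2(γ₁−1)), M_{λ₁} = (2λ₁ (2λ₁+1)^{−1/2} ∫_{−1}^{1} (1−z²)^{λ₁} dz)^{−1}, a₁(ρ) = M_{λ₁} k(ρ)^{−λ₁} k'(ρ)^{−1/2}, a₂(ρ) = −(4(λ₁+1))^{−1} k(ρ)^{−λ₁−1} k'(ρ)^{−1/2} ∫₀^ρ k(s)^{λ₁} k'(s)^{−1/2} a₁''(s) ds, b₁(ρ) = M_{λ₁} ρ k(ρ)^{−λ₁−1} k'(ρ)^{1/2}, and b₂(ρ) = −(4(λ₁+1))^{−1} ρ k'(ρ)^{1/2} k(ρ)^{−(λ₁+2)} ∫₀^ρ k(s)^{λ₁} k'(s)^{−1/2} a₁''(s) ds − (4(λ₁+1))^{−1} k(ρ)^{−(λ₁+2)} k'(ρ)^{−1/2} ∫₀^ρ k(s)^{λ₁+1} k'(s)^{−1/2} b₁''(s) ds + (4(λ₁+1))^{−1} k(ρ)^{−(λ₁+2)} k'(ρ)^{−1/2} ∫₀^ρ s k(s)^{λ₁}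 k'(s)^{1/2} a₁''(s) ds, define D(ρ) = a₁(ρ)b₁(ρ) − 2k(ρ)²(a₁(ρ)b₂(ρ) − a₂(ρ)b₁(ρ)). Then for every ρ > 0: D(ρ) = (M_{λ₁}²/(2(λ₁+1))) k(ρ)^{−2λ₁} k'(ρ)^{−2} (k'(ρ) + (d/dρ)(ρ k'(ρ))), and D(ρ) > 0; equivalently, k'(ρ) + (d/dρ)(ρk'(ρ)) = (2P'(ρ) + ρP''(ρ))/(2ρ√(P'(ρ))) > 0. -/

import Mathlib

open Set MeasureTheory Filter

/-!
Write `localExponent f s = s f'(s) / f(s)`, and let `h` and `e` be the local exponents of `k`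
and `k'`. Then `b₁ = a₁ h`, so `a₁''` cancels in the difference of the integrands of the last two
integrals in `b₂`, and what remains is an exact derivative:
`M k ^ (2 λ + 1) (k ^ (-2 λ) h' / k')' = M (e - (2 λ + 2) h)'`.
The integral shared by `a₂` and `b₂` drops out of `a₁ b₂ - a₂ b₁`, so `D` only involves the explicit
difference `M (2 + e - (2 λ + 2) h)`, and its `h` term cancels against `a₁ b₁`, leaving
`2 + e = (k' + (ρ k')') / k'`.

The integrals converge at the vacuum because `λ` is chosen such that the local exponent of `a₁`
vanishes there: with `θ = (γ₁ - 1) / 2` one has `h → θ` and `e → θ - 1` at the rate `ρ ^ (2 θ)`.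
-/

open scoped Topology

open Asymptotics

section RateLimit

/-- `f` has the limit `c` at `0⁺` with algebraic rate `α`, and the rate may be differentiated
once: `f s - c = O(s ^ α)` and `f' s = O(s ^ (α - 1))`. Only the germ of `f` at `0⁺` matters. -/
structure HasRateLimit (f : ℝ → ℝ) (c α : ℝ) : Prop where
  differentiable : ∀ᶠ s in 𝓝[>] 0, DifferentiableAt ℝ f s
  isBigO_sub : (fun s ↦ f s - c) =O[𝓝[>] 0] fun s ↦ s ^ α
  isBigO_deriv : deriv f =O[𝓝[>] 0] fun s ↦ s ^ (α - 1)

variable {f g : ℝ → ℝ} {c d α ρ : ℝ}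

theorem tendsto_rpow_nhdsGT_zero (hα : 0 < α) :
    Tendsto (fun s : ℝ ↦ s ^ α) (𝓝[>] 0) (𝓝 0) := by
  have h := (Real.continuousAt_rpow_const 0 α (Or.inr hα.le)).tendsto
  rw [Real.zero_rpow hα.ne'] at h
  exact h.mono_left nhdsWithin_le_nhds

theorem div_id_isBigO_rpow (hf : f =O[𝓝[>] 0] fun s ↦ s ^ α) :
    (fun s ↦ f s / s) =O[𝓝[>] 0] fun s ↦ s ^ (α - 1) := by
  refine (hf.mul (isBigO_refl (fun s : ℝ ↦ s⁻¹) (𝓝[>] 0))).congr'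
    (.of_forall fun s ↦ (div_eq_mul_inv _ _).symm) ?_
  filter_upwards [self_mem_nhdsWithin] with s hs
  rw [Real.rpow_sub_one (ne_of_gt hs), div_eq_mul_inv]

namespace HasRateLimit

theorem tendsto (hf : HasRateLimit f c α) (hα : 0 < α) : Tendsto f (𝓝[>] 0) (𝓝 c) :=
  tendsto_sub_nhds_zero_iff.1 (hf.isBigO_sub.trans_tendsto (tendsto_rpow_nhdsGT_zero hα))

theorem const (c α : ℝ) : HasRateLimit (fun _ ↦ c) c α where
  differentiable := .of_forall fun _ ↦ differentiableAt_const c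
  isBigO_sub := by simpa using isBigO_zero _ _
  isBigO_deriv := by simpa using isBigO_zero _ _

theorem congr (hf : HasRateLimit f c α) (h : g =ᶠ[𝓝[>] 0] f) : HasRateLimit g c α := by
  have h_nhds : ∀ᶠ s in 𝓝[>] 0, g =ᶠ[𝓝 s] f := by
    filter_upwards [eventually_eventually_nhdsWithin.2 h, self_mem_nhdsWithin] with s hs hs0
    rwa [IsOpen.nhdsWithin_eq isOpen_Ioi hs0] at hs
  refine ⟨?_, hf.isBigO_sub.congr' ?_ .rfl, hf.isBigO_deriv.congr' ?_ .rfl⟩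
  · filter_upwards [h_nhds, hf.differentiable] with s hs hfs using hs.differentiableAt_iff.2 hfs
  · filter_upwards [h] with s hs using by rw [hs]
  · filter_upwards [h_nhds] with s hs using hs.deriv_eq.symm

theorem add (hf : HasRateLimit f c α) (hg : HasRateLimit g d α) :
    HasRateLimit (fun s ↦ f s + g s) (c + d) α where
  differentiable := hf.differentiable.and hg.differentiable |>.mono fun _ h ↦ h.1.add h.2
  isBigO_sub := (hf.isBigO_sub.add hg.isBigO_sub).congr_left fun s ↦ by ring
  isBigO_deriv := by
    refine (hf.isBigO_deriv.add hg.isBigO_deriv).congr' ?_ .rfl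
    filter_upwards [hf.differentiable, hg.differentiable] with s hfs hgs
      using (deriv_fun_add hfs hgs).symm

theorem mul (hf : HasRateLimit f c α) (hg : HasRateLimit g d α) (hα : 0 < α) :
    HasRateLimit (fun s ↦ f s * g s) (c * d) α where
  differentiable := hf.differentiable.and hg.differentiable |>.mono fun _ h ↦ h.1.mul h.2
  isBigO_sub := by
    have h := hf.isBigO_sub.mul ((hg.tendsto hα).isBigO_one ℝ)
    simp only [mul_one] at h
    exact (h.add (hg.isBigO_sub.const_mul_left c)).congr_left fun s ↦ by ring
  isBigO_deriv := by
    have h_left := hf.isBigO_deriv.mul ((hg.tendsto hα).isBigO_one ℝ)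
    have h_right := ((hf.tendsto hα).isBigO_one ℝ).mul hg.isBigO_deriv
    simp only [mul_one, one_mul] at h_left h_right
    refine (h_left.add h_right).congr' ?_ .rfl
    filter_upwards [hf.differentiable, hg.differentiable] with s hfs hgs
      using (deriv_fun_mul hfs hgs).symm

theorem const_mul (hf : HasRateLimit f c α) (a : ℝ) :
    HasRateLimit (fun s ↦ a * f s) (a * c) α where
  differentiable := hf.differentiable.mono fun _ h ↦ h.const_mul a
  isBigO_sub := (hf.isBigO_sub.const_mul_left a).congr_left fun s ↦ by ring
  isBigO_deriv := by simpa using hf.isBigO_deriv.const_mul_left a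

theorem inv (hf : HasRateLimit f c α) (hα : 0 < α) (hc : c ≠ 0) :
    HasRateLimit (fun s ↦ (f s)⁻¹) c⁻¹ α := by
  have h_ne := (hf.tendsto hα).eventually_ne hc
  have h_inv := ((hf.tendsto hα).inv₀ hc).isBigO_one ℝ
  refine ⟨?_, ?_, ?_⟩
  · filter_upwards [hf.differentiable, h_ne] with s hfs hs using hfs.inv hs
  · have h := (hf.isBigO_sub.mul h_inv).const_mul_left (-c⁻¹)
    simp only [mul_one] at h
    refine h.congr' ?_ .rfl
    filter_upwards [h_ne] with s hs
    field
  · have h := ((hf.isBigO_deriv.mul h_inv).mul h_inv).neg_left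
    simp only [mul_one] at h
    refine h.congr' ?_ .rfl
    filter_upwards [hf.differentiable, h_ne] with s hfs hs
    rw [deriv_fun_inv'' hfs hs]
    field

end HasRateLimit

theorem intervalIntegrable_of_isBigO_rpow (hf : ContinuousOn f (Ioi 0))
    (hO : f =O[𝓝[>] 0] fun s ↦ s ^ (α - 1)) (hα : 0 < α) (hρ : 0 < ρ) :
    IntervalIntegrable f volume 0 ρ := by
  obtain ⟨δ, hδ, h_near⟩ := mellin_convergent_zero_of_isBigO (b := 1 - α) (s := 1)
    (hf.aestronglyMeasurable measurableSet_Ioi) (by simpa using hO) (by linarith)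
  have h_zero_δ : IntervalIntegrable f volume 0 δ := by
    rw [intervalIntegrable_iff_integrableOn_Ioc_of_le hδ.le]
    simpa using h_near
  have h_δ_ρ : IntervalIntegrable f volume δ ρ :=
    (hf.mono fun x hx ↦ (lt_min hδ hρ).trans_le hx.1).intervalIntegrable
  exact h_zero_δ.trans h_δ_ρ

theorem HasRateLimit.intervalIntegrable_deriv (hf : HasRateLimit f c α)
    (hf_C1 : ContDiffOn ℝ 1 f (Ioi 0)) (hα : 0 < α) (hρ : 0 < ρ) :
    IntervalIntegrable (deriv f) volume 0 ρ :=
  intervalIntegrable_of_isBigO_rpow (hf_C1.continuousOn_deriv_of_isOpen isOpen_Ioi le_rfl)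
    hf.isBigO_deriv hα hρ

theorem HasRateLimit.integral_deriv (hf : HasRateLimit f c α)
    (hf_C1 : ContDiffOn ℝ 1 f (Ioi 0)) (hα : 0 < α) (hρ : 0 < ρ) :
    ∫ s in (0 : ℝ)..ρ, deriv f s = f ρ - c := by
  have h_deriv : ∀ s, 0 < s → HasDerivAt f (deriv f s) s := fun s hs ↦
    (hf_C1.differentiableOn one_ne_zero).hasDerivAt (Ioi_mem_nhds hs)
  exact intervalIntegral.integral_eq_sub_of_hasDerivAt_of_tendsto hρ (fun s hs ↦ h_deriv s hs.1)
    (hf.intervalIntegrable_deriv hf_C1 hα hρ) (hf.tendsto hα)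
    ((h_deriv ρ hρ).continuousAt.tendsto.mono_left nhdsWithin_le_nhds)

-- L'Hôpital's rule with a rate: by Cauchy's mean value theorem `f s / g s` is a value of
-- `f' / g'` at a point of `(0, s)`.
theorem isBigO_div_sub_of_deriv (hα : 0 ≤ α)
    (hf : ∀ s, 0 < s → DifferentiableAt ℝ f s) (hg : ∀ s, 0 < s → DifferentiableAt ℝ g s)
    (hg_ne : ∀ s, 0 < s → g s ≠ 0) (hg'_ne : ∀ s, 0 < s → deriv g s ≠ 0)
    (hf_zero : Tendsto f (𝓝[>] 0) (𝓝 0)) (hg_zero : Tendsto g (𝓝[>] 0) (𝓝 0))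
    (h : (fun s ↦ deriv f s / deriv g s - c) =O[𝓝[>] 0] fun s ↦ s ^ α) :
    (fun s ↦ f s / g s - c) =O[𝓝[>] 0] fun s ↦ s ^ α := by
  obtain ⟨C, hC, h_bound⟩ := h.exists_nonneg
  obtain ⟨δ, hδ, h_bound⟩ := mem_nhdsGT_iff_exists_Ioo_subset.1 h_bound.bound
  refine .of_bound C ?_
  filter_upwards [Ioo_mem_nhdsGT hδ] with s hs
  obtain ⟨t, ht, h_slope⟩ := exists_ratio_hasDerivAt_eq_ratio_slope' f (deriv f) hs.1 g (deriv g)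
    (fun x hx ↦ (hf x hx.1).hasDerivAt) (fun x hx ↦ (hg x hx.1).hasDerivAt) hf_zero hg_zero
    ((hf s hs.1).continuousAt.tendsto.mono_left nhdsWithin_le_nhds)
    ((hg s hs.1).continuousAt.tendsto.mono_left nhdsWithin_le_nhds)
  have h_ratio : f s / g s = deriv f t / deriv g t := by
    rw [div_eq_div_iff (hg_ne s hs.1) (hg'_ne t ht.1)]
    linear_combination -h_slope
  have h_rpow : t ^ α ≤ s ^ α := Real.rpow_le_rpow ht.1.le ht.2.le hα
  calc ‖f s / g s - c‖ ≤ C * ‖t ^ α‖ := h_ratio ▸ h_bound ⟨ht.1, ht.2.trans hs.2⟩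
    _ ≤ C * ‖s ^ α‖ := by
      rw [Real.norm_of_nonneg (Real.rpow_nonneg ht.1.le α),
        Real.norm_of_nonneg (Real.rpow_nonneg hs.1.le α)]
      gcongr

theorem hasRateLimit_pow_mul_iteratedDeriv {n j : ℕ} (hf : ContDiffOn ℝ n f (Ioi 0)) (hj : j < n)
    (hO : ∀ i ≤ n, (fun s ↦ s ^ i * iteratedDeriv i f s) =O[𝓝[>] 0] fun s ↦ s ^ α) :
    HasRateLimit (fun s ↦ s ^ j * iteratedDeriv j f s) 0 α := by
  have h_diff : ∀ s, 0 < s → DifferentiableAt ℝ (iteratedDeriv j f) s := fun s hs ↦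
    ((hf.differentiableOn_iteratedDerivWithin (mod_cast hj) isOpen_Ioi.uniqueDiffOn).congr
      fun x hx ↦ (iteratedDerivWithin_of_isOpen isOpen_Ioi hx).symm).differentiableAt
      (Ioi_mem_nhds hs)
  have h_deriv : ∀ s, 0 < s → deriv (fun s ↦ s ^ j * iteratedDeriv j f s) s =
      (j * (s ^ j * iteratedDeriv j f s) + s ^ (j + 1) * iteratedDeriv (j + 1) f s) / s := by
    intro s hs
    have h_pow : (j : ℝ) * s ^ (j - 1) = j * s ^ j / s := by
      rcases j with _ | j
      · simp
      · rw [Nat.add_sub_cancel, pow_succ]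
        field
    rw [deriv_fun_mul (differentiableAt_pow j) (h_diff s hs), ← iteratedDeriv_succ,
      deriv_pow_field, h_pow, pow_succ]
    field
  refine ⟨?_, by simpa using hO j hj.le, ?_⟩
  · filter_upwards [self_mem_nhdsWithin] with s hs using (differentiableAt_pow j).mul (h_diff s hs)
  · refine (div_id_isBigO_rpow (((hO j hj.le).const_mul_left j).add (hO (j + 1) hj))).congr' ?_ .rfl
    filter_upwards [self_mem_nhdsWithin] with s hs using (h_deriv s hs).symm

end RateLimit

section LocalExponent

/-- The local exponent `s f'(s) / f(s)` of `f` at `s`; it is constantly `γ` when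
`f s = κ s ^ γ`. Products, quotients and powers act on it additively. -/
noncomputable def localExponent (f : ℝ → ℝ) (s : ℝ) : ℝ := s * logDeriv f s

variable {f g : ℝ → ℝ} {a s : ℝ}

theorem localExponent_congr (h : f =ᶠ[𝓝 s] g) : localExponent f s = localExponent g s :=
  congrArg (s * ·) (logDeriv_congr_nhds h).eq_of_nhds

theorem localExponent_mul (hf : DifferentiableAt ℝ f s) (hg : DifferentiableAt ℝ g s)
    (hf_ne : f s ≠ 0) (hg_ne : g s ≠ 0) :
    localExponent (fun t ↦ f t * g t) s = localExponent f s + localExponent g s := by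
  simp only [localExponent, logDeriv_mul s hf_ne hg_ne hf hg, mul_add]

theorem localExponent_const_mul (ha : a ≠ 0) :
    localExponent (fun t ↦ a * f t) s = localExponent f s :=
  congrArg (s * ·) (logDeriv_const_mul s a ha)

theorem localExponent_rpow (hf_pos : 0 < f s) (hf : DifferentiableAt ℝ f s) :
    localExponent (fun t ↦ f t ^ a) s = a * localExponent f s := by
  have h_ne := (Real.rpow_pos_of_pos hf_pos a).ne'
  rw [localExponent, localExponent, logDeriv_apply, logDeriv_apply,
    (hf.hasDerivAt.rpow_const (.inl hf_pos.ne')).deriv, Real.rpow_sub_one hf_pos.ne']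
  field

theorem localExponent_rpow_id (hs : 0 < s) : localExponent (fun t ↦ t ^ a) s = a := by
  have h_id : localExponent (fun t ↦ t) s = 1 := by
    rw [localExponent, logDeriv_id', mul_one_div_cancel hs.ne']
  rw [localExponent_rpow hs differentiableAt_fun_id, h_id, mul_one]

theorem deriv_localExponent (hs : s ≠ 0) (hf_ne : f s ≠ 0) (hf : DifferentiableAt ℝ f s)
    (hf' : DifferentiableAt ℝ (deriv f) s) :
    deriv (localExponent f) s =
      s * deriv (deriv f) s / f s + (localExponent f s - localExponent f s ^ 2) / s := by
  have h : HasDerivAt (localExponent f)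
      (1 * logDeriv f s + s * ((deriv (deriv f) s * f s - deriv f s * deriv f s) / f s ^ 2)) s :=
    (hasDerivAt_id s).mul (hf'.hasDerivAt.div hf.hasDerivAt hf_ne)
  rw [h.deriv, localExponent, logDeriv_apply]
  field

theorem contDiffOn_localExponent {n : WithTop ℕ∞} {U : Set ℝ} (hU : IsOpen U)
    (hf : ContDiffOn ℝ (n + 1) f U) (hf_ne : ∀ s ∈ U, f s ≠ 0) :
    ContDiffOn ℝ n (localExponent f) U :=
  contDiffOn_id.mul ((hf.deriv_of_isOpen hU le_rfl).div (hf.of_le le_self_add) hf_ne)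

theorem deriv_deriv_mul (hf : ContDiffAt ℝ 2 f s) (hg : ContDiffAt ℝ 2 g s) :
    deriv (deriv fun t ↦ f t * g t) s =
      deriv (deriv f) s * g s + 2 * deriv f s * deriv g s + f s * deriv (deriv g) s := by
  have h := iteratedDeriv_fun_mul (n := 2) hf hg
  simp only [iteratedDeriv_succ, iteratedDeriv_zero, Finset.sum_range_succ, Finset.sum_range_zero,
    Nat.choose, Nat.reduceSub, Nat.reduceAdd, Nat.cast_one, Nat.cast_ofNat, one_mul, zero_add,
    Nat.add_zero] at h
  rw [h]
  ring

end LocalExponent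

section VacuumProfile

/-- A function `k` on `(0, ∞)` with the regularity, monotonicity and vacuum asymptotics of
`∫₀^ρ √(P'(y)) / y dy`: near `0⁺` it resembles `ρ ^ θ`, in the sense that the local exponent of
`k'` has the limit `θ - 1` with rate `2 θ`. -/
structure IsVacuumProfile (k : ℝ → ℝ) (θ : ℝ) : Prop where
  exponent_pos : 0 < θ
  contDiffOn : ContDiffOn ℝ 3 k (Ioi 0)
  pos : ∀ s, 0 < s → 0 < k s
  deriv_pos : ∀ s, 0 < s → 0 < deriv k s
  tendsto_zero : Tendsto k (𝓝[>] 0) (𝓝 0)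
  tendsto_id_mul_deriv_zero : Tendsto (fun s ↦ s * deriv k s) (𝓝[>] 0) (𝓝 0)
  hasRateLimit_deriv : HasRateLimit (localExponent (deriv k)) (θ - 1) (2 * θ)

/-- The leading coefficient `a₁` of the entropy kernel. -/
noncomputable def entropyCoeff (k : ℝ → ℝ) (M lam s : ℝ) : ℝ :=
  M * k s ^ (-lam) * deriv k s ^ (-(1 : ℝ) / 2)

/-- The leading coefficient `b₁` of the entropy flux kernel. -/
noncomputable def entropyFluxCoeff (k : ℝ → ℝ) (M lam s : ℝ) : ℝ :=
  M * s * k s ^ (-lam - 1) * deriv k s ^ ((1 : ℝ) / 2)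

/-- The primitive of the difference of the two integrands in the second entropy flux
coefficient `b₂`, written with the local exponents of `k'` and `k`. -/
noncomputable def fluxDefect (k : ℝ → ℝ) (M lam s : ℝ) : ℝ :=
  M * (localExponent (deriv k) s + -(2 * lam + 2) * localExponent k s)

namespace IsVacuumProfile

variable {k : ℝ → ℝ} {θ M lam s ρ : ℝ}

theorem contDiffOn_deriv (hk : IsVacuumProfile k θ) : ContDiffOn ℝ 2 (deriv k) (Ioi 0) :=
  hk.contDiffOn.deriv_of_isOpen isOpen_Ioi le_rfl

theorem differentiableAt (hk : IsVacuumProfile k θ) (hs : 0 < s) : DifferentiableAt ℝ k s :=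
  (hk.contDiffOn.differentiableOn three_ne_zero).differentiableAt (Ioi_mem_nhds hs)

theorem differentiableAt_deriv (hk : IsVacuumProfile k θ) (hs : 0 < s) :
    DifferentiableAt ℝ (deriv k) s :=
  (hk.contDiffOn_deriv.differentiableOn two_ne_zero).differentiableAt (Ioi_mem_nhds hs)

theorem contDiffOn_localExponent (hk : IsVacuumProfile k θ) :
    ContDiffOn ℝ 2 (localExponent k) (Ioi 0) :=
  _root_.contDiffOn_localExponent isOpen_Ioi hk.contDiffOn fun s hs ↦ (hk.pos s hs).ne'

theorem contDiffOn_localExponent_deriv (hk : IsVacuumProfile k θ) :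
    ContDiffOn ℝ 1 (localExponent (deriv k)) (Ioi 0) :=
  _root_.contDiffOn_localExponent isOpen_Ioi hk.contDiffOn_deriv
    fun s hs ↦ (hk.deriv_pos s hs).ne'

theorem hasDerivAt_localExponent (hk : IsVacuumProfile k θ) (hs : 0 < s) :
    HasDerivAt (localExponent k) (deriv (localExponent k) s) s :=
  (hk.contDiffOn_localExponent.differentiableOn two_ne_zero).hasDerivAt (Ioi_mem_nhds hs)

theorem hasDerivAt_localExponent_deriv (hk : IsVacuumProfile k θ) (hs : 0 < s) :
    HasDerivAt (localExponent (deriv k)) (deriv (localExponent (deriv k)) s) s :=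
  (hk.contDiffOn_localExponent_deriv.differentiableOn one_ne_zero).hasDerivAt (Ioi_mem_nhds hs)

theorem localExponent_pos (hk : IsVacuumProfile k θ) (hs : 0 < s) : 0 < localExponent k s :=
  mul_pos hs (div_pos (hk.deriv_pos s hs) (hk.pos s hs))

theorem deriv_id_mul_deriv (hk : IsVacuumProfile k θ) (hs : 0 < s) :
    deriv (fun t ↦ t * deriv k t) s = deriv k s * (1 + localExponent (deriv k) s) := by
  have hk'_ne := (hk.deriv_pos s hs).ne'
  rw [deriv_fun_mul differentiableAt_fun_id (hk.differentiableAt_deriv hs), deriv_id'',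
    localExponent, logDeriv_apply]
  field

theorem deriv_localExponent (hk : IsVacuumProfile k θ) (hs : 0 < s) :
    deriv (localExponent k) s =
      localExponent k s * (1 + localExponent (deriv k) s - localExponent k s) / s := by
  have hk_ne := (hk.pos s hs).ne'
  have hk'_ne := (hk.deriv_pos s hs).ne'
  rw [_root_.deriv_localExponent hs.ne' hk_ne (hk.differentiableAt hs)
    (hk.differentiableAt_deriv hs)]
  simp only [localExponent, logDeriv_apply]
  field

theorem hasRateLimit_localExponent (hk : IsVacuumProfile k θ) :
    HasRateLimit (localExponent k) θ (2 * θ) := by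
  have h_sub : (fun s ↦ localExponent k s - θ) =O[𝓝[>] 0] fun s ↦ s ^ (2 * θ) := by
    refine (isBigO_div_sub_of_deriv (f := fun s ↦ s * deriv k s)
      (by linarith [hk.exponent_pos]) (fun s hs ↦ differentiableAt_id.mul
        (hk.differentiableAt_deriv hs)) (fun s hs ↦ hk.differentiableAt hs)
      (fun s hs ↦ (hk.pos s hs).ne') (fun s hs ↦ (hk.deriv_pos s hs).ne')
      hk.tendsto_id_mul_deriv_zero hk.tendsto_zero ?_).congr_left
      fun s ↦ by rw [mul_div_assoc]; rfl
    refine hk.hasRateLimit_deriv.isBigO_sub.congr' ?_ .rfl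
    filter_upwards [self_mem_nhdsWithin] with s hs
    rw [hk.deriv_id_mul_deriv hs, mul_div_cancel_left₀ _ (hk.deriv_pos s hs).ne']
    ring
  have h_lim : Tendsto (localExponent k) (𝓝[>] 0) (𝓝 θ) := tendsto_sub_nhds_zero_iff.1 <|
    h_sub.trans_tendsto (tendsto_rpow_nhdsGT_zero (by linarith [hk.exponent_pos]))
  refine ⟨?_, h_sub, ?_⟩
  · filter_upwards [self_mem_nhdsWithin] with s hs
      using (hk.hasDerivAt_localExponent hs).differentiableAt
  · have h_factor := (h_lim.isBigO_one ℝ).mul (hk.hasRateLimit_deriv.isBigO_sub.sub h_sub)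
    simp only [one_mul] at h_factor
    refine (div_id_isBigO_rpow h_factor).congr' ?_ .rfl
    filter_upwards [self_mem_nhdsWithin] with s hs
    rw [hk.deriv_localExponent hs]
    ring

theorem contDiffOn_entropyCoeff (hk : IsVacuumProfile k θ) :
    ContDiffOn ℝ 2 (entropyCoeff k M lam) (Ioi 0) :=
  (contDiffOn_const.mul ((hk.contDiffOn.of_le (by norm_num)).rpow_const_of_ne
    fun s hs ↦ (hk.pos s hs).ne')).mul
    (hk.contDiffOn_deriv.rpow_const_of_ne fun s hs ↦ (hk.deriv_pos s hs).ne')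

theorem entropyCoeff_ne_zero (hk : IsVacuumProfile k θ) (hM : M ≠ 0) (hs : 0 < s) :
    entropyCoeff k M lam s ≠ 0 :=
  mul_ne_zero (mul_ne_zero hM (Real.rpow_pos_of_pos (hk.pos s hs) _).ne')
    (Real.rpow_pos_of_pos (hk.deriv_pos s hs) _).ne'

theorem localExponent_entropyCoeff (hk : IsVacuumProfile k θ) (hM : M ≠ 0) (hs : 0 < s) :
    localExponent (entropyCoeff k M lam) s =
      -lam * localExponent k s + -(1 : ℝ) / 2 * localExponent (deriv k) s := by
  have hk_pos := hk.pos s hs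
  have hk'_pos := hk.deriv_pos s hs
  have hk_rpow := (hk.differentiableAt hs).rpow_const (p := -lam) (.inl hk_pos.ne')
  have hk'_rpow := (hk.differentiableAt_deriv hs).rpow_const (p := -(1 : ℝ) / 2)
    (.inl hk'_pos.ne')
  have h_factor : entropyCoeff k M lam =
      fun t ↦ M * (k t ^ (-lam) * deriv k t ^ (-(1 : ℝ) / 2)) :=
    funext fun t ↦ mul_assoc _ _ _
  rw [h_factor, localExponent_const_mul hM, localExponent_mul hk_rpow hk'_rpow
    (Real.rpow_pos_of_pos hk_pos _).ne' (Real.rpow_pos_of_pos hk'_pos _).ne',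
    localExponent_rpow hk_pos (hk.differentiableAt hs),
    localExponent_rpow hk'_pos (hk.differentiableAt_deriv hs)]

theorem entropyFluxCoeff_eq (hk : IsVacuumProfile k θ) (hs : 0 < s) :
    entropyFluxCoeff k M lam s = entropyCoeff k M lam s * localExponent k s := by
  rw [entropyFluxCoeff, entropyCoeff, localExponent, logDeriv_apply,
    Real.rpow_sub_one (hk.pos s hs).ne', show (1 : ℝ) / 2 = -(1 : ℝ) / 2 + 1 by norm_num,
    Real.rpow_add_one (hk.deriv_pos s hs).ne']
  ring

theorem hasRateLimit_localExponent_entropyCoeff (hk : IsVacuumProfile k θ) (hM : M ≠ 0)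
    (hlam : 2 * lam * θ = 1 - θ) :
    HasRateLimit (localExponent (entropyCoeff k M lam)) 0 (2 * θ) := by
  have h := (hk.hasRateLimit_localExponent.const_mul (-lam)).add
    (hk.hasRateLimit_deriv.const_mul (-(1 : ℝ) / 2))
  rw [show -lam * θ + -(1 : ℝ) / 2 * (θ - 1) = 0 by linarith] at h
  refine h.congr ?_
  filter_upwards [self_mem_nhdsWithin] with s hs using hk.localExponent_entropyCoeff hM hs

theorem rpow_mul_rpow_mul_entropyCoeff (hk : IsVacuumProfile k θ) (hs : 0 < s) :
    k s ^ lam * deriv k s ^ ((1 : ℝ) / 2) * entropyCoeff k M lam s = M := by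
  have hk_rpow := (Real.rpow_pos_of_pos (hk.pos s hs) lam).ne'
  have hk'_rpow := (Real.rpow_pos_of_pos (hk.deriv_pos s hs) ((1 : ℝ) / 2)).ne'
  rw [entropyCoeff, neg_div, Real.rpow_neg (hk.pos s hs).le, Real.rpow_neg (hk.deriv_pos s hs).le]
  field

theorem intervalIntegrable_entropyCoeff (hk : IsVacuumProfile k θ) (hM : M ≠ 0)
    (hlam : 2 * lam * θ = 1 - θ) (hρ : 0 < ρ) :
    IntervalIntegrable (fun s ↦ s * k s ^ lam * deriv k s ^ ((1 : ℝ) / 2) *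
      deriv (deriv (entropyCoeff k M lam)) s) volume 0 ρ := by
  set a := entropyCoeff k M lam with ha
  set q := localExponent a with hq
  have ha_C2 : ContDiffOn ℝ 2 a (Ioi 0) := hk.contDiffOn_entropyCoeff
  have hq_C1 : ContDiffOn ℝ 1 q (Ioi 0) :=
    _root_.contDiffOn_localExponent isOpen_Ioi ha_C2 fun s hs ↦ hk.entropyCoeff_ne_zero hM hs
  have hq_rate : HasRateLimit q 0 (2 * θ) := hk.hasRateLimit_localExponent_entropyCoeff hM hlam
  have h_exponent : 0 < 2 * θ := by linarith [hk.exponent_pos]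
  have h_eq : ∀ s, 0 < s → s * k s ^ lam * deriv k s ^ ((1 : ℝ) / 2) * deriv (deriv a) s =
      M * (deriv q s + (q s * q s - q s) / s) := by
    intro s hs
    have ha_ne : a s ≠ 0 := hk.entropyCoeff_ne_zero hM hs
    have ha' := (ha_C2.deriv_of_isOpen isOpen_Ioi (m := 1) le_rfl).differentiableOn one_ne_zero
    rw [hq, _root_.deriv_localExponent hs.ne' ha_ne
      ((ha_C2.differentiableOn two_ne_zero).differentiableAt (Ioi_mem_nhds hs))
      (ha'.differentiableAt (Ioi_mem_nhds hs)),
      ← hk.rpow_mul_rpow_mul_entropyCoeff (M := M) (lam := lam) hs, ← ha]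
    field
  refine (intervalIntegrable_of_isBigO_rpow (α := 2 * θ)
    (f := fun s ↦ M * (deriv q s + (q s * q s - q s) / s)) ?_ ?_ h_exponent hρ).congr ?_
  · have hq_cont := hq_C1.continuousOn
    exact continuousOn_const.mul ((hq_C1.continuousOn_deriv_of_isOpen isOpen_Ioi le_rfl).add
      (((hq_cont.mul hq_cont).sub hq_cont).div continuousOn_id fun s hs ↦ ne_of_gt hs))
  · have h_sq := (hq_rate.mul hq_rate h_exponent).isBigO_sub
    have hq_O := hq_rate.isBigO_sub
    simp only [mul_zero, sub_zero] at h_sq hq_O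
    exact (hq_rate.isBigO_deriv.add (div_id_isBigO_rpow (h_sq.sub hq_O))).const_mul_left M
  · intro s hs
    rw [uIoc_of_le hρ.le] at hs
    exact (h_eq s hs.1).symm

theorem deriv_deriv_localExponent (hk : IsVacuumProfile k θ) (hs : 0 < s) :
    deriv (deriv (localExponent k)) s = localExponent k s / s * (
      deriv (localExponent (deriv k)) s - deriv (localExponent k) s +
      (localExponent (deriv k) s - localExponent k s) *
        (1 + localExponent (deriv k) s - localExponent k s) / s) := by
  have h_eq : deriv (localExponent k) =ᶠ[𝓝 s] fun t ↦
      localExponent k t * (1 + localExponent (deriv k) t - localExponent k t) / t := by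
    filter_upwards [Ioi_mem_nhds hs] with t ht using hk.deriv_localExponent ht
  have hh := hk.hasDerivAt_localExponent hs
  have he := hk.hasDerivAt_localExponent_deriv hs
  rw [h_eq.deriv_eq, ((hh.fun_mul ((he.const_add 1).fun_sub hh)).fun_div (hasDerivAt_id' s)
    hs.ne').deriv, hk.deriv_localExponent hs]
  field

theorem deriv_fluxDefect (hk : IsVacuumProfile k θ) (hs : 0 < s) :
    deriv (fluxDefect k M lam) s =
      M * (deriv (localExponent (deriv k)) s + -(2 * lam + 2) * deriv (localExponent k) s) :=
  (((hk.hasDerivAt_localExponent_deriv hs).add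
    ((hk.hasDerivAt_localExponent hs).const_mul _)).const_mul M).deriv

-- Since the flux coefficient is the entropy coefficient times `localExponent k`, the second
-- derivative of the entropy coefficient cancels in the difference of the integrands.
theorem entropyFlux_integrand_eq (hk : IsVacuumProfile k θ) (hM : M ≠ 0) (hs : 0 < s) :
    k s ^ (lam + 1) * deriv k s ^ (-(1 : ℝ) / 2) * deriv (deriv (entropyFluxCoeff k M lam)) s =
      s * k s ^ lam * deriv k s ^ ((1 : ℝ) / 2) * deriv (deriv (entropyCoeff k M lam)) s +
        deriv (fluxDefect k M lam) s := by
  set a := entropyCoeff k M lam with ha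
  set h := localExponent k with hh
  set e := localExponent (deriv k) with he
  have ha_C2 : ContDiffOn ℝ 2 a (Ioi 0) := hk.contDiffOn_entropyCoeff
  have h_pos : 0 < h s := hk.localExponent_pos hs
  have h_flux : deriv (deriv (entropyFluxCoeff k M lam)) s =
      deriv (deriv a) s * h s + 2 * deriv a s * deriv h s + a s * deriv (deriv h) s := by
    have h_eq : entropyFluxCoeff k M lam =ᶠ[𝓝 s] fun t ↦ a t * h t := by
      filter_upwards [Ioi_mem_nhds hs] with t ht using hk.entropyFluxCoeff_eq ht
    rw [h_eq.deriv.deriv_eq, deriv_deriv_mul (ha_C2.contDiffAt (Ioi_mem_nhds hs))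
      (hk.contDiffOn_localExponent.contDiffAt (Ioi_mem_nhds hs))]
  have h_deriv_a : deriv a s = a s * (-lam * h s + -(1 : ℝ) / 2 * e s) / s := by
    have ha_ne : a s ≠ 0 := hk.entropyCoeff_ne_zero hM hs
    rw [← hk.localExponent_entropyCoeff hM hs, localExponent, logDeriv_apply]
    field
  have h_rpow : k s ^ (lam + 1) * deriv k s ^ (-(1 : ℝ) / 2) =
      k s ^ lam * deriv k s ^ ((1 : ℝ) / 2) * s / h s := by
    have hk_ne := (hk.pos s hs).ne'
    have hk'_ne := (hk.deriv_pos s hs).ne'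
    rw [Real.rpow_add_one hk_ne, show -(1 : ℝ) / 2 = 1 / 2 - 1 by norm_num,
      Real.rpow_sub_one hk'_ne, hh, localExponent, logDeriv_apply]
    field
  rw [h_flux, h_rpow, hk.deriv_fluxDefect hs, h_deriv_a, hk.deriv_deriv_localExponent hs,
    ← hk.rpow_mul_rpow_mul_entropyCoeff (M := M) (lam := lam) hs, ← ha, ← hh, ← he,
    hk.deriv_localExponent hs, ← hh, ← he]
  field

theorem hasRateLimit_fluxDefect (hk : IsVacuumProfile k θ) (hlam : 2 * lam * θ = 1 - θ) :
    HasRateLimit (fluxDefect k M lam) (-(2 * M)) (2 * θ) := by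
  have h := (hk.hasRateLimit_deriv.add
    (hk.hasRateLimit_localExponent.const_mul (-(2 * lam + 2)))).const_mul M
  rwa [show M * (θ - 1 + -(2 * lam + 2) * θ) = -(2 * M) by linear_combination -M * hlam] at h

theorem integral_entropyFlux_sub (hk : IsVacuumProfile k θ) (hM : M ≠ 0)
    (hlam : 2 * lam * θ = 1 - θ) (hρ : 0 < ρ) :
    (∫ s in (0 : ℝ)..ρ, k s ^ (lam + 1) * deriv k s ^ (-(1 : ℝ) / 2) *
        deriv (deriv (entropyFluxCoeff k M lam)) s) -
      ∫ s in (0 : ℝ)..ρ, s * k s ^ lam * deriv k s ^ ((1 : ℝ) / 2) *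
        deriv (deriv (entropyCoeff k M lam)) s =
      fluxDefect k M lam ρ + 2 * M := by
  have h_exponent : 0 < 2 * θ := by linarith [hk.exponent_pos]
  have h_C1 : ContDiffOn ℝ 1 (fluxDefect k M lam) (Ioi 0) :=
    contDiffOn_const.mul (hk.contDiffOn_localExponent_deriv.add
      (contDiffOn_const.mul (hk.contDiffOn_localExponent.of_le one_le_two)))
  have h_rate := hk.hasRateLimit_fluxDefect (M := M) hlam
  rw [intervalIntegral.integral_congr_ae (g := fun s ↦
      s * k s ^ lam * deriv k s ^ ((1 : ℝ) / 2) * deriv (deriv (entropyCoeff k M lam)) s +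
        deriv (fluxDefect k M lam) s) (.of_forall fun s hs ↦ ?_),
    intervalIntegral.integral_add (hk.intervalIntegrable_entropyCoeff hM hlam hρ)
      (h_rate.intervalIntegrable_deriv h_C1 h_exponent hρ),
    h_rate.integral_deriv h_C1 h_exponent hρ]
  · ring
  · rw [uIoc_of_le hρ.le] at hs
    exact hk.entropyFlux_integrand_eq hM hs.1

end IsVacuumProfile

end VacuumProfile

section KernelDeterminant

/-- The second coefficient `a₂` of the entropy kernel. -/
noncomputable def secondEntropyCoeff (k : ℝ → ℝ) (M lam ρ : ℝ) : ℝ :=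
  -(4 * (lam + 1))⁻¹ * k ρ ^ (-lam - 1) * deriv k ρ ^ (-(1 : ℝ) / 2) *
    ∫ s in (0 : ℝ)..ρ,
      k s ^ lam * deriv k s ^ (-(1 : ℝ) / 2) * deriv (deriv (entropyCoeff k M lam)) s

/-- The second coefficient `b₂` of the entropy flux kernel. -/
noncomputable def secondEntropyFluxCoeff (k : ℝ → ℝ) (M lam ρ : ℝ) : ℝ :=
  -(4 * (lam + 1))⁻¹ * ρ * deriv k ρ ^ ((1 : ℝ) / 2) * k ρ ^ (-(lam + 2)) *
      (∫ s in (0 : ℝ)..ρ,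
        k s ^ lam * deriv k s ^ (-(1 : ℝ) / 2) * deriv (deriv (entropyCoeff k M lam)) s)
    - (4 * (lam + 1))⁻¹ * k ρ ^ (-(lam + 2)) * deriv k ρ ^ (-(1 : ℝ) / 2) *
      (∫ s in (0 : ℝ)..ρ,
        k s ^ (lam + 1) * deriv k s ^ (-(1 : ℝ) / 2) * deriv (deriv (entropyFluxCoeff k M lam)) s)
    + (4 * (lam + 1))⁻¹ * k ρ ^ (-(lam + 2)) * deriv k ρ ^ (-(1 : ℝ) / 2) *
      (∫ s in (0 : ℝ)..ρ,
        s * k s ^ lam * deriv k s ^ ((1 : ℝ) / 2) * deriv (deriv (entropyCoeff k M lam)) s)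

/-- The determinant `D = a₁ b₁ - 2 k² (a₁ b₂ - a₂ b₁)` of the kernel coefficients, whose
positivity drives the reduction of the Young measure. -/
noncomputable def kernelDeterminant (k : ℝ → ℝ) (M lam ρ : ℝ) : ℝ :=
  entropyCoeff k M lam ρ * entropyFluxCoeff k M lam ρ -
    2 * k ρ ^ 2 * (entropyCoeff k M lam ρ * secondEntropyFluxCoeff k M lam ρ -
      secondEntropyCoeff k M lam ρ * entropyFluxCoeff k M lam ρ)

variable {k : ℝ → ℝ} {θ M lam ρ : ℝ}

theorem kernelDeterminant_eq_integral_sub (hk_pos : 0 < k ρ) (hk'_pos : 0 < deriv k ρ)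
    (hlam : lam + 1 ≠ 0) :
    kernelDeterminant k M lam ρ = k ρ ^ (-(2 * lam)) * deriv k ρ ^ (-(2 : ℝ)) *
      (M ^ 2 * ρ * deriv k ρ ^ 2 / k ρ + M * deriv k ρ / (2 * (lam + 1)) *
        ((∫ s in (0 : ℝ)..ρ, k s ^ (lam + 1) * deriv k s ^ (-(1 : ℝ) / 2) *
            deriv (deriv (entropyFluxCoeff k M lam)) s) -
          ∫ s in (0 : ℝ)..ρ, s * k s ^ lam * deriv k s ^ ((1 : ℝ) / 2) *
            deriv (deriv (entropyCoeff k M lam)) s)) := by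
  rw [kernelDeterminant, secondEntropyFluxCoeff, secondEntropyCoeff]
  -- The first integral contributes equally to `a₁ b₂` and `a₂ b₁`.
  generalize (∫ s in (0 : ℝ)..ρ, k s ^ lam * deriv k s ^ (-(1 : ℝ) / 2) *
    deriv (deriv (entropyCoeff k M lam)) s) = I₁
  generalize (∫ s in (0 : ℝ)..ρ, k s ^ (lam + 1) * deriv k s ^ (-(1 : ℝ) / 2) *
    deriv (deriv (entropyFluxCoeff k M lam)) s) = I₂
  generalize (∫ s in (0 : ℝ)..ρ, s * k s ^ lam * deriv k s ^ ((1 : ℝ) / 2) *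
    deriv (deriv (entropyCoeff k M lam)) s) = I₃
  rw [entropyCoeff, entropyFluxCoeff]
  generalize k ρ = x at *
  obtain ⟨w, hw, h_sqrt⟩ : ∃ w, 0 < w ∧ deriv k ρ = w ^ 2 :=
    ⟨√(deriv k ρ), Real.sqrt_pos.2 hk'_pos, (Real.sq_sqrt hk'_pos.le).symm⟩
  rw [h_sqrt]
  have h_sub_one : x ^ (-lam - 1) = x ^ (-lam) / x := Real.rpow_sub_one hk_pos.ne' _
  have h_sub_two : x ^ (-(lam + 2)) = x ^ (-lam) / x ^ 2 := by
    rw [neg_add', Real.rpow_sub hk_pos, Real.rpow_two]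
  have h_double : x ^ (-(2 * lam)) = (x ^ (-lam)) ^ 2 := by
    rw [← Real.rpow_mul_natCast hk_pos.le]
    ring_nf
  have h_half : (w ^ 2) ^ ((1 : ℝ) / 2) = w := by rw [← Real.sqrt_eq_rpow, Real.sqrt_sq hw.le]
  have h_neg_half : (w ^ 2) ^ (-(1 : ℝ) / 2) = w⁻¹ := by
    rw [neg_div, Real.rpow_neg (sq_nonneg w), h_half]
  have h_neg_two : (w ^ 2) ^ (-(2 : ℝ)) = ((w ^ 2) ^ 2)⁻¹ := by
    rw [Real.rpow_neg (sq_nonneg w), Real.rpow_two]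
  rw [h_sub_one, h_sub_two, h_double, h_half, h_neg_half, h_neg_two]
  field

theorem IsVacuumProfile.lam_add_one_pos (hk : IsVacuumProfile k θ)
    (hlam : 2 * lam * θ = 1 - θ) : 0 < lam + 1 := by
  have hθ := hk.exponent_pos
  nlinarith

theorem IsVacuumProfile.kernelDeterminant_eq (hk : IsVacuumProfile k θ) (hM : M ≠ 0)
    (hlam : 2 * lam * θ = 1 - θ) (hρ : 0 < ρ) :
    kernelDeterminant k M lam ρ =
      M ^ 2 / (2 * (lam + 1)) * k ρ ^ (-(2 * lam)) * deriv k ρ ^ (-(2 : ℝ)) *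
        (deriv k ρ + deriv (fun r ↦ r * deriv k r) ρ) := by
  have hk_pos := hk.pos ρ hρ
  have hlam_pos := hk.lam_add_one_pos hlam
  rw [kernelDeterminant_eq_integral_sub hk_pos (hk.deriv_pos ρ hρ) hlam_pos.ne',
    hk.integral_entropyFlux_sub hM hlam hρ, hk.deriv_id_mul_deriv hρ, fluxDefect,
    show localExponent k ρ = ρ * deriv k ρ / k ρ from (mul_div_assoc _ _ _).symm]
  field

theorem IsVacuumProfile.kernelDeterminant_pos (hk : IsVacuumProfile k θ) (hM : M ≠ 0)
    (hlam : 2 * lam * θ = 1 - θ) (hρ : 0 < ρ)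
    (h_sum : 0 < deriv k ρ + deriv (fun r ↦ r * deriv k r) ρ) :
    0 < kernelDeterminant k M lam ρ := by
  have hk_pos := hk.pos ρ hρ
  have hk'_pos := hk.deriv_pos ρ hρ
  have hlam_pos := hk.lam_add_one_pos hlam
  rw [hk.kernelDeterminant_eq hM hlam hρ]
  positivity

end KernelDeterminant

section Pressure

/-- The function `k(ρ) = ∫₀^ρ √(P'(y)) / y dy` of the pressure law `P`, whose integrand is the
sound speed divided by the density. -/
noncomputable def soundIntegral (P : ℝ → ℝ) (ρ : ℝ) : ℝ :=
  ∫ y in (0 : ℝ)..ρ, √(deriv P y) / y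

/-- A strictly increasing pressure law whose vacuum behaviour is that of `ρ ^ (2 θ + 1)`. -/
structure IsVacuumPressure (P : ℝ → ℝ) (θ : ℝ) : Prop where
  exponent_pos : 0 < θ
  contDiffOn : ContDiffOn ℝ 3 P (Ioi 0)
  deriv_pos : ∀ s, 0 < s → 0 < deriv P s
  hasRateLimit_deriv : HasRateLimit (localExponent (deriv P)) (2 * θ) (2 * θ)
  sqrt_deriv_isBigO : (fun s ↦ √(deriv P s)) =O[𝓝[>] 0] fun s ↦ s ^ θ

section PowerLaw

/-- The factor `γ (1 + Q) + s Q'` in the derivative `κ s ^ (γ - 1) (γ (1 + Q) + s Q')` of the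
perturbed power law `κ s ^ γ (1 + Q)`. -/
noncomputable def powerLawFactor (γ : ℝ) (Q : ℝ → ℝ) (s : ℝ) : ℝ :=
  γ * (1 + Q s) + s * deriv Q s

variable {P Q : ℝ → ℝ} {γ κ α : ℝ}

theorem deriv_eventuallyEq_powerLaw (hQ : ContDiffOn ℝ 1 Q (Ioi 0))
    (hP : P =ᶠ[𝓝[>] 0] fun s ↦ κ * s ^ γ * (1 + Q s)) :
    deriv P =ᶠ[𝓝[>] 0] fun s ↦ κ * (s ^ (γ - 1) * powerLawFactor γ Q s) := by
  filter_upwards [eventually_eventually_nhdsWithin.2 hP, self_mem_nhdsWithin] with s hs hs0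
  rw [IsOpen.nhdsWithin_eq isOpen_Ioi hs0] at hs
  have hs_ne : s ≠ 0 := ne_of_gt hs0
  have hQ' := (hQ.differentiableOn one_ne_zero).hasDerivAt (Ioi_mem_nhds hs0)
  rw [EventuallyEq.deriv_eq hs, (((Real.hasDerivAt_rpow_const (.inl hs_ne)).const_mul κ).fun_mul
    (hQ'.const_add 1)).deriv, Real.rpow_sub_one hs_ne, powerLawFactor]
  field

theorem hasRateLimit_powerLawFactor
    (hQ_rate : ∀ j < 3, HasRateLimit (fun s ↦ s ^ j * iteratedDeriv j Q s) 0 α) :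
    HasRateLimit (powerLawFactor γ Q) γ α := by
  have hQ₀ := hQ_rate 0 (by norm_num)
  have hQ₁ := hQ_rate 1 (by norm_num)
  simp only [pow_zero, one_mul, iteratedDeriv_zero, pow_one, iteratedDeriv_one] at hQ₀ hQ₁
  have h := (((HasRateLimit.const 1 α).add hQ₀).const_mul γ).add hQ₁
  rwa [add_zero, add_zero, mul_one] at h

theorem hasRateLimit_localExponent_powerLawFactor (hγ : γ ≠ 0) (hα : 0 < α)
    (hQ : ContDiffOn ℝ 2 Q (Ioi 0))
    (hQ_rate : ∀ j < 3, HasRateLimit (fun s ↦ s ^ j * iteratedDeriv j Q s) 0 α) :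
    HasRateLimit (localExponent (powerLawFactor γ Q)) 0 α := by
  have hQ₁ := hQ_rate 1 (by norm_num)
  have hQ₂ := hQ_rate 2 (by norm_num)
  have h := ((hQ₁.const_mul (γ + 1)).add hQ₂).mul
    ((hasRateLimit_powerLawFactor (γ := γ) hQ_rate).inv hα hγ) hα
  simp only [pow_one, iteratedDeriv_succ, iteratedDeriv_zero, mul_zero,
    add_zero, zero_mul] at h
  refine h.congr ?_
  filter_upwards [self_mem_nhdsWithin] with s hs
  have hQ' := (hQ.differentiableOn two_ne_zero).hasDerivAt (Ioi_mem_nhds hs)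
  have hQ'' := ((hQ.deriv_of_isOpen isOpen_Ioi (m := 1) le_rfl).differentiableOn
    one_ne_zero).hasDerivAt (Ioi_mem_nhds hs)
  have h_deriv : HasDerivAt (powerLawFactor γ Q)
      (γ * deriv Q s + (1 * deriv Q s + s * deriv (deriv Q) s)) s :=
    ((hQ'.const_add 1).const_mul γ).add ((hasDerivAt_id' s).fun_mul hQ'')
  rw [localExponent, logDeriv_apply, h_deriv.deriv]
  ring

theorem hasRateLimit_localExponent_deriv_powerLaw (hγ : γ ≠ 0) (hα : 0 < α)
    (hQ : ContDiffOn ℝ 2 Q (Ioi 0))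
    (hQ_rate : ∀ j < 3, HasRateLimit (fun s ↦ s ^ j * iteratedDeriv j Q s) 0 α)
    (hκ : κ ≠ 0) (hP : P =ᶠ[𝓝[>] 0] fun s ↦ κ * s ^ γ * (1 + Q s)) :
    HasRateLimit (localExponent (deriv P)) (γ - 1) α := by
  have h_factor := hasRateLimit_powerLawFactor (γ := γ) hQ_rate
  have h := (HasRateLimit.const (γ - 1) α).add
    (hasRateLimit_localExponent_powerLawFactor hγ hα hQ hQ_rate)
  rw [add_zero] at h
  refine h.congr ?_
  filter_upwards [eventually_eventually_nhdsWithin.2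
    (deriv_eventuallyEq_powerLaw (hQ.of_le one_le_two) hP), self_mem_nhdsWithin,
    h_factor.differentiable, (h_factor.tendsto hα).eventually_ne hγ] with s hs hs0 hA_diff hA_ne
  rw [IsOpen.nhdsWithin_eq isOpen_Ioi hs0] at hs
  rw [localExponent_congr hs, localExponent_const_mul hκ, localExponent_mul
    (Real.differentiableAt_rpow_const_of_ne _ (ne_of_gt hs0)) hA_diff
    (Real.rpow_pos_of_pos hs0 _).ne' hA_ne, localExponent_rpow_id hs0]

theorem sqrt_deriv_powerLaw_isBigO (hα : 0 < α) (hQ : ContDiffOn ℝ 1 Q (Ioi 0))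
    (hQ_rate : ∀ j < 3, HasRateLimit (fun s ↦ s ^ j * iteratedDeriv j Q s) 0 α)
    (hP : P =ᶠ[𝓝[>] 0] fun s ↦ κ * s ^ γ * (1 + Q s)) :
    (fun s ↦ √(deriv P s)) =O[𝓝[>] 0] fun s ↦ s ^ ((γ - 1) / 2) := by
  have h_bounded := ((hasRateLimit_powerLawFactor (γ := γ) hQ_rate).tendsto hα).isBigO_one ℝ
  have h_deriv : deriv P =O[𝓝[>] 0] fun s ↦ s ^ (γ - 1) := by
    refine ((((isBigO_refl (fun s : ℝ ↦ s ^ (γ - 1)) (𝓝[>] 0)).mul h_bounded).const_mul_left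
      κ).congr_right fun s ↦ mul_one _).congr' (deriv_eventuallyEq_powerLaw hQ hP).symm .rfl
  refine (h_deriv.sqrt ?_).congr' .rfl ?_
  all_goals filter_upwards [self_mem_nhdsWithin] with s hs
  · exact Real.rpow_nonneg (le_of_lt hs) _
  · rw [Real.sqrt_eq_rpow, ← Real.rpow_mul (le_of_lt hs), mul_one_div]

theorem isVacuumPressure_of_powerLaw {R C : ℝ} (hP : ContDiffOn ℝ 3 P (Ioi 0))
    (hP' : ∀ s, 0 < s → 0 < deriv P s) (hR : 0 < R) (hγ : 1 < γ)
    (hQ : ContDiffOn ℝ 3 Q (Ioi 0)) (hPQ : ∀ s ∈ Ioo 0 R, P s = κ * s ^ γ * (1 + Q s))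
    (hQ_bound : ∀ s ∈ Ioo 0 R, ∀ j : ℕ, j ≤ 3 → |iteratedDeriv j Q s| ≤ C * s ^ (γ - 1 - j)) :
    IsVacuumPressure P ((γ - 1) / 2) := by
  have hα : 0 < γ - 1 := by linarith
  have hPQ_germ : P =ᶠ[𝓝[>] 0] fun s ↦ κ * s ^ γ * (1 + Q s) :=
    eventually_of_mem (Ioo_mem_nhdsGT hR) hPQ
  have hQ_rate : ∀ j < 3, HasRateLimit (fun s ↦ s ^ j * iteratedDeriv j Q s) 0 (γ - 1) := by
    refine fun j hj ↦ hasRateLimit_pow_mul_iteratedDeriv (mod_cast hQ) hj fun i hi ↦ ?_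
    refine .of_bound C ?_
    filter_upwards [Ioo_mem_nhdsGT hR] with s hs
    have h_pow : s ^ (γ - 1) = s ^ i * s ^ (γ - 1 - i) := by
      rw [← Real.rpow_natCast, ← Real.rpow_add hs.1]
      ring_nf
    rw [Real.norm_of_nonneg (Real.rpow_nonneg hs.1.le _), norm_mul, Real.norm_eq_abs,
      Real.norm_eq_abs, abs_of_pos (pow_pos hs.1 i), h_pow, mul_left_comm]
    exact mul_le_mul_of_nonneg_left (hQ_bound s hs i hi) (pow_nonneg hs.1.le i)
  have hκ : κ ≠ 0 := by
    rintro rfl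
    obtain ⟨s, hs, hs0⟩ := ((deriv_eventuallyEq_powerLaw (hQ.of_le (by norm_num))
      hPQ_germ).and self_mem_nhdsWithin).exists
    exact (hP' s hs0).ne' (by simpa using hs)
  refine ⟨by linarith, hP, hP', ?_,
    sqrt_deriv_powerLaw_isBigO hα (hQ.of_le (by norm_num)) hQ_rate hPQ_germ⟩
  rw [mul_div_cancel₀ _ two_ne_zero]
  exact hasRateLimit_localExponent_deriv_powerLaw (by linarith) hα (hQ.of_le (by norm_num)) hQ_rate
    hκ hPQ_germ

end PowerLaw

namespace IsVacuumPressure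

variable {P : ℝ → ℝ} {θ s ρ : ℝ}

theorem contDiffOn_deriv (hP : IsVacuumPressure P θ) : ContDiffOn ℝ 2 (deriv P) (Ioi 0) :=
  hP.contDiffOn.deriv_of_isOpen isOpen_Ioi le_rfl

theorem differentiableAt_deriv (hP : IsVacuumPressure P θ) (hs : 0 < s) :
    DifferentiableAt ℝ (deriv P) s :=
  (hP.contDiffOn_deriv.differentiableOn two_ne_zero).differentiableAt (Ioi_mem_nhds hs)

theorem sqrt_deriv_pos (hP : IsVacuumPressure P θ) (hs : 0 < s) : 0 < √(deriv P s) :=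
  Real.sqrt_pos.2 (hP.deriv_pos s hs)

theorem contDiffOn_integrand (hP : IsVacuumPressure P θ) :
    ContDiffOn ℝ 2 (fun y ↦ √(deriv P y) / y) (Ioi 0) :=
  (hP.contDiffOn_deriv.sqrt fun s hs ↦ (hP.deriv_pos s hs).ne').div contDiffOn_id
    fun _ hs ↦ ne_of_gt hs

theorem intervalIntegrable_integrand (hP : IsVacuumPressure P θ) (hρ : 0 < ρ) :
    IntervalIntegrable (fun y ↦ √(deriv P y) / y) volume 0 ρ :=
  intervalIntegrable_of_isBigO_rpow hP.contDiffOn_integrand.continuousOn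
    (div_id_isBigO_rpow hP.sqrt_deriv_isBigO) hP.exponent_pos hρ

theorem hasDerivAt_soundIntegral (hP : IsVacuumPressure P θ) (hs : 0 < s) :
    HasDerivAt (soundIntegral P) (√(deriv P s) / s) s :=
  have h_cont := hP.contDiffOn_integrand.continuousOn
  intervalIntegral.integral_hasDerivAt_right (hP.intervalIntegrable_integrand hs)
    (h_cont.stronglyMeasurableAtFilter isOpen_Ioi s hs) (h_cont.continuousAt (Ioi_mem_nhds hs))

theorem deriv_soundIntegral (hP : IsVacuumPressure P θ) (hs : 0 < s) :
    deriv (soundIntegral P) s = √(deriv P s) / s :=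
  (hP.hasDerivAt_soundIntegral hs).deriv

theorem id_mul_deriv_soundIntegral (hP : IsVacuumPressure P θ) (hs : 0 < s) :
    s * deriv (soundIntegral P) s = √(deriv P s) := by
  rw [hP.deriv_soundIntegral hs, mul_div_cancel₀ _ hs.ne']

theorem soundIntegral_pos (hP : IsVacuumPressure P θ) (hs : 0 < s) : 0 < soundIntegral P s :=
  intervalIntegral.intervalIntegral_pos_of_pos_on (hP.intervalIntegrable_integrand hs)
    (fun _ hy ↦ div_pos (hP.sqrt_deriv_pos hy.1) hy.1) hs

theorem contDiffOn_soundIntegral (hP : IsVacuumPressure P θ) :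
    ContDiffOn ℝ 3 (soundIntegral P) (Ioi 0) := by
  refine (contDiffOn_succ_iff_deriv_of_isOpen (n := 2) isOpen_Ioi).2
    ⟨fun s hs ↦ (hP.hasDerivAt_soundIntegral hs).differentiableAt.differentiableWithinAt,
      by simp, hP.contDiffOn_integrand.congr fun s hs ↦ hP.deriv_soundIntegral hs⟩

theorem tendsto_soundIntegral (hP : IsVacuumPressure P θ) :
    Tendsto (soundIntegral P) (𝓝[>] 0) (𝓝 0) := by
  have h_cont : ContinuousOn (soundIntegral P) (uIcc 0 1) :=
    intervalIntegral.continuousOn_primitive_interval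
      ((intervalIntegrable_iff' (by simp)).1 (hP.intervalIntegrable_integrand one_pos))
  have h := (h_cont 0 left_mem_uIcc).tendsto
  rw [uIcc_of_le zero_le_one, soundIntegral, intervalIntegral.integral_same] at h
  rw [← nhdsWithin_Ioo_eq_nhdsGT one_pos]
  exact h.mono_left (nhdsWithin_mono _ Ioo_subset_Icc_self)

theorem localExponent_deriv_soundIntegral (hP : IsVacuumPressure P θ) (hs : 0 < s) :
    localExponent (deriv (soundIntegral P)) s = 1 / 2 * localExponent (deriv P) s - 1 := by
  have hP'_pos := hP.deriv_pos s hs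
  have h_sqrt : HasDerivAt (fun y ↦ √(deriv P y)) (deriv (deriv P) s / (2 * √(deriv P s))) s :=
    (hP.differentiableAt_deriv hs).hasDerivAt.sqrt hP'_pos.ne'
  have h_eq : deriv (soundIntegral P) =ᶠ[𝓝 s] fun y ↦ √(deriv P y) / y := by
    filter_upwards [Ioi_mem_nhds hs] with y hy using hP.deriv_soundIntegral hy
  rw [localExponent_congr h_eq, localExponent, localExponent, logDeriv_apply, logDeriv_apply,
    (h_sqrt.fun_div (hasDerivAt_id' s) hs.ne').deriv]
  have h_sq := Real.sq_sqrt hP'_pos.le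
  field_simp [(hP.sqrt_deriv_pos hs).ne']
  rw [h_sq]
  ring

theorem isVacuumProfile_soundIntegral (hP : IsVacuumPressure P θ) :
    IsVacuumProfile (soundIntegral P) θ where
  exponent_pos := hP.exponent_pos
  contDiffOn := hP.contDiffOn_soundIntegral
  pos _ hs := hP.soundIntegral_pos hs
  deriv_pos s hs := hP.deriv_soundIntegral hs ▸ div_pos (hP.sqrt_deriv_pos hs) hs
  tendsto_zero := hP.tendsto_soundIntegral
  tendsto_id_mul_deriv_zero := by
    refine (hP.sqrt_deriv_isBigO.trans_tendsto
      (tendsto_rpow_nhdsGT_zero hP.exponent_pos)).congr' ?_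
    filter_upwards [self_mem_nhdsWithin] with s hs using (hP.id_mul_deriv_soundIntegral hs).symm
  hasRateLimit_deriv := by
    have h := (hP.hasRateLimit_deriv.const_mul (1 / 2)).add (HasRateLimit.const (-1) (2 * θ))
    rw [show 1 / 2 * (2 * θ) + -1 = θ - 1 by ring] at h
    refine h.congr ?_
    filter_upwards [self_mem_nhdsWithin] with s hs using hP.localExponent_deriv_soundIntegral hs

theorem deriv_soundIntegral_add_deriv_id_mul (hP : IsVacuumPressure P θ) (hρ : 0 < ρ) :
    deriv (soundIntegral P) ρ + deriv (fun r ↦ r * deriv (soundIntegral P) r) ρ =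
      (2 * deriv P ρ + ρ * deriv (deriv P) ρ) / (2 * ρ * √(deriv P ρ)) := by
  have hP'_pos := hP.deriv_pos ρ hρ
  have h_sq := Real.sq_sqrt hP'_pos.le
  rw [hP.isVacuumProfile_soundIntegral.deriv_id_mul_deriv hρ,
    hP.localExponent_deriv_soundIntegral hρ, hP.deriv_soundIntegral hρ, localExponent,
    logDeriv_apply]
  field_simp [(hP.sqrt_deriv_pos hρ).ne']
  rw [h_sq]
  ring

end IsVacuumPressure

end Pressure

theorem kernel_normalization_ne_zero {lam : ℝ} (hlam : 0 < lam) :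
    (2 * lam / √(2 * lam + 1) * ∫ z in (-1 : ℝ)..1, (1 - z ^ 2) ^ lam)⁻¹ ≠ 0 := by
  have h_cont : Continuous fun z : ℝ ↦ (1 - z ^ 2) ^ lam :=
    (by fun_prop : Continuous fun z : ℝ ↦ 1 - z ^ 2).rpow_const fun _ ↦ .inr hlam.le
  have h_pos : 0 < ∫ z in (-1 : ℝ)..1, (1 - z ^ 2) ^ lam :=
    intervalIntegral.intervalIntegral_pos_of_pos_on (h_cont.intervalIntegrable _ _)
      (fun z hz ↦ Real.rpow_pos_of_pos (by nlinarith [hz.1, hz.2]) _) (by norm_num)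
  positivity

theorem kernel_determinant_positive_general
    (P Q : ℝ → ℝ) (R γ κ C lam M : ℝ)
    (hP : ContDiffOn ℝ 3 P (Ioi 0))
    (hH1 : ∀ ρ : ℝ, 0 < ρ → 0 < deriv P ρ ∧ 0 < 2 * deriv P ρ + ρ * deriv (deriv P) ρ)
    (hR : 0 < R) (hγ : 1 < γ) (hQ : ContDiffOn ℝ 3 Q (Ioi 0))
    (hPQ : ∀ ρ ∈ Ioo (0 : ℝ) R, P ρ = κ * ρ ^ γ * (1 + Q ρ))
    (hQ_bound : ∀ ρ ∈ Ioo (0 : ℝ) R, ∀ j : ℕ, j ≤ 3 →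
      |iteratedDeriv j Q ρ| ≤ C * ρ ^ (γ - 1 - (j : ℝ)))
    (hlam : lam = (3 - γ) / (2 * (γ - 1))) (hM : M ≠ 0)
    (k a₁ a₂ b₁ b₂ D : ℝ → ℝ)
    (hk : ∀ ρ : ℝ, k ρ = ∫ y in (0 : ℝ)..ρ, √(deriv P y) / y)
    (ha₁ : ∀ ρ : ℝ, a₁ ρ = M * k ρ ^ (-lam) * deriv k ρ ^ (-(1 : ℝ) / 2))
    (ha₂ : ∀ ρ : ℝ, a₂ ρ = -(4 * (lam + 1))⁻¹ * k ρ ^ (-lam - 1) * deriv k ρ ^ (-(1 : ℝ) / 2) *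
      ∫ s in (0 : ℝ)..ρ, k s ^ lam * deriv k s ^ (-(1 : ℝ) / 2) * deriv (deriv a₁) s)
    (hb₁ : ∀ ρ : ℝ, b₁ ρ = M * ρ * k ρ ^ (-lam - 1) * deriv k ρ ^ ((1 : ℝ) / 2))
    (hb₂ : ∀ ρ : ℝ, b₂ ρ =
      -(4 * (lam + 1))⁻¹ * ρ * deriv k ρ ^ ((1 : ℝ) / 2) * k ρ ^ (-(lam + 2)) *
        (∫ s in (0 : ℝ)..ρ, k s ^ lam * deriv k s ^ (-(1 : ℝ) / 2) * deriv (deriv a₁) s)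
      - (4 * (lam + 1))⁻¹ * k ρ ^ (-(lam + 2)) * deriv k ρ ^ (-(1 : ℝ) / 2) *
        (∫ s in (0 : ℝ)..ρ, k s ^ (lam + 1) * deriv k s ^ (-(1 : ℝ) / 2) * deriv (deriv b₁) s)
      + (4 * (lam + 1))⁻¹ * k ρ ^ (-(lam + 2)) * deriv k ρ ^ (-(1 : ℝ) / 2) *
        (∫ s in (0 : ℝ)..ρ, s * k s ^ lam * deriv k s ^ ((1 : ℝ) / 2) * deriv (deriv a₁) s))
    (hD : ∀ ρ : ℝ, D ρ = a₁ ρ * b₁ ρ - 2 * k ρ ^ 2 * (a₁ ρ * b₂ ρ - a₂ ρ * b₁ ρ)) :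
    ∀ ρ : ℝ, 0 < ρ →
      (D ρ = M ^ 2 / (2 * (lam + 1)) * k ρ ^ (-(2 * lam)) * deriv k ρ ^ (-(2 : ℝ)) *
        (deriv k ρ + deriv (fun r ↦ r * deriv k r) ρ)) ∧
      0 < D ρ ∧
      (deriv k ρ + deriv (fun r ↦ r * deriv k r) ρ
        = (2 * deriv P ρ + ρ * deriv (deriv P) ρ) / (2 * ρ * √(deriv P ρ))) ∧
      0 < deriv k ρ + deriv (fun r ↦ r * deriv k r) ρ := by
  intro ρ hρ
  obtain rfl : k = soundIntegral P := funext hk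
  obtain rfl : a₁ = entropyCoeff (soundIntegral P) M lam := funext ha₁
  obtain rfl : b₁ = entropyFluxCoeff (soundIntegral P) M lam := funext hb₁
  obtain rfl : a₂ = secondEntropyCoeff (soundIntegral P) M lam := funext ha₂
  obtain rfl : b₂ = secondEntropyFluxCoeff (soundIntegral P) M lam := funext hb₂
  obtain rfl : D = kernelDeterminant (soundIntegral P) M lam := funext hD
  have h_pressure : IsVacuumPressure P ((γ - 1) / 2) :=
    isVacuumPressure_of_powerLaw hP (fun s hs ↦ (hH1 s hs).1) hR hγ hQ hPQ hQ_bound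
  have h_profile := h_pressure.isVacuumProfile_soundIntegral
  have hlam_exponent : 2 * lam * ((γ - 1) / 2) = 1 - (γ - 1) / 2 := by
    have : γ - 1 ≠ 0 := by linarith
    rw [hlam]
    field
  have h_sum := h_pressure.deriv_soundIntegral_add_deriv_id_mul hρ
  have h_sum_pos : 0 < deriv (soundIntegral P) ρ +
      deriv (fun r ↦ r * deriv (soundIntegral P) r) ρ :=
    h_sum ▸ div_pos (hH1 ρ hρ).2 (mul_pos (by linarith) (h_pressure.sqrt_deriv_pos hρ))
  exact ⟨h_profile.kernelDeterminant_eq hM hlam_exponent hρ,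
    h_profile.kernelDeterminant_pos hM hlam_exponent hρ h_sum_pos, h_sum, h_sum_pos⟩

theorem kernel_determinant_positive
    (P Q₁ Q₂ : ℝ → ℝ) (ρstar ρss γ₁ γ₂ κ₁ κ₂ Cs Css εe : ℝ)
    (hPC1 : ContDiffOn ℝ 1 P (Ici 0))
    (hPC4 : ContDiffOn ℝ 4 P (Ioi 0))
    (hH1 : ∀ ρ : ℝ, 0 < ρ → 0 < deriv P ρ ∧ 0 < 2 * deriv P ρ + ρ * deriv (deriv P) ρ)
    (hρstar : 0 < ρstar) (hγ₁ : 1 < γ₁) (hγ₁3 : γ₁ < 3) (hκ₁ : 0 < κ₁) (hCs : 0 < Cs)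
    (hQ₁C4 : ContDiffOn ℝ 4 Q₁ (Ioi 0))
    (hPsmall : ∀ ρ ∈ Ico (0:ℝ) ρstar, P ρ = κ₁ * ρ ^ γ₁ * (1 + Q₁ ρ))
    (hQ₁bd : ∀ ρ ∈ Ioo (0:ℝ) ρstar, ∀ j : ℕ, j ≤ 4 →
      |iteratedDeriv j Q₁ ρ| ≤ Cs * ρ ^ (γ₁ - 1 - (j : ℝ)))
    (hρss : ρstar < ρss) (hγ₂ : 6/5 < γ₂) (hγ₂1 : γ₂ ≤ γ₁) (hκ₂ : 0 < κ₂)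
    (hεe : 0 < εe) (hCss : 0 < Css)
    (hQ₂C4 : ContDiffOn ℝ 4 Q₂ (Ioi 0))
    (hPlarge : ∀ ρ : ℝ, ρss ≤ ρ → P ρ = κ₂ * ρ ^ γ₂ * (1 + Q₂ ρ))
    (hQ₂bd : ∀ ρ : ℝ, ρss ≤ ρ → ∀ j : ℕ, j ≤ 4 →
      |iteratedDeriv j Q₂ ρ| ≤ Css * ρ ^ (-εe - (j : ℝ)))
    (lam₁ Mlam θ₁ θ₂ : ℝ)
    (hlam₁ : lam₁ = (3 - γ₁) / (2 * (γ₁ - 1)))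
    (hMlam : Mlam = (2 * lam₁ / Real.sqrt (2 * lam₁ + 1) * ∫ z in (-1:ℝ)..1, (1 - z ^ 2) ^ lam₁)⁻¹)
    (hθ₁ : θ₁ = (γ₁ - 1) / 2) (hθ₂ : θ₂ = (γ₂ - 1) / 2)
    (k a₁ a₂ : ℝ → ℝ)
    (hk : ∀ ρ : ℝ, k ρ = ∫ y in (0:ℝ)..ρ, Real.sqrt (deriv P y) / y)
    (ha₁ : ∀ ρ : ℝ, a₁ ρ = Mlam * k ρ ^ (-lam₁) * deriv k ρ ^ (-(1:ℝ)/2))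
    (ha₂ : ∀ ρ : ℝ, a₂ ρ = -(4 * (lam₁ + 1))⁻¹ * k ρ ^ (-lam₁ - 1) * deriv k ρ ^ (-(1:ℝ)/2) *
      ∫ s in (0:ℝ)..ρ, k s ^ lam₁ * deriv k s ^ (-(1:ℝ)/2) * deriv (deriv a₁) s)
    (b₁ b₂ : ℝ → ℝ)
    (hb₁ : ∀ ρ : ℝ, b₁ ρ = Mlam * ρ * k ρ ^ (-lam₁ - 1) * deriv k ρ ^ ((1:ℝ)/2))
    (hb₂ : ∀ ρ : ℝ, b₂ ρ =
      -(4 * (lam₁ + 1))⁻¹ * ρ * deriv k ρ ^ ((1:ℝ)/2) * k ρ ^ (-(lam₁ + 2)) *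
        (∫ s in (0:ℝ)..ρ, k s ^ lam₁ * deriv k s ^ (-(1:ℝ)/2) * deriv (deriv a₁) s)
      - (4 * (lam₁ + 1))⁻¹ * k ρ ^ (-(lam₁ + 2)) * deriv k ρ ^ (-(1:ℝ)/2) *
        (∫ s in (0:ℝ)..ρ, k s ^ (lam₁ + 1) * deriv k s ^ (-(1:ℝ)/2) * deriv (deriv b₁) s)
      + (4 * (lam₁ + 1))⁻¹ * k ρ ^ (-(lam₁ + 2)) * deriv k ρ ^ (-(1:ℝ)/2) *
        (∫ s in (0:ℝ)..ρ, s * k s ^ lam₁ * deriv k s ^ ((1:ℝ)/2) * deriv (deriv a₁) s))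
    (D : ℝ → ℝ)
    (hD : ∀ ρ : ℝ, D ρ = a₁ ρ * b₁ ρ - 2 * k ρ ^ 2 * (a₁ ρ * b₂ ρ - a₂ ρ * b₁ ρ)) :
    ∀ ρ : ℝ, 0 < ρ →
      (D ρ = Mlam ^ 2 / (2 * (lam₁ + 1)) * k ρ ^ (-(2 * lam₁)) * deriv k ρ ^ (-(2:ℝ)) *
        (deriv k ρ + deriv (fun r => r * deriv k r) ρ)) ∧
      0 < D ρ ∧
      (deriv k ρ + deriv (fun r => r * deriv k r) ρ
        = (2 * deriv P ρ + ρ * deriv (deriv P) ρ) / (2 * ρ * Real.sqrt (deriv P ρ))) ∧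
      0 < deriv k ρ + deriv (fun r => r * deriv k r) ρ := by
  have hlam_pos : 0 < lam₁ := hlam₁ ▸ div_pos (by linarith) (by linarith)
  exact kernel_determinant_positive_general P Q₁ ρstar γ₁ κ₁ Cs lam₁ Mlam
    (hPC4.of_le (by norm_num)) hH1 hρstar hγ₁ (hQ₁C4.of_le (by norm_num))
    (fun ρ hρ ↦ hPsmall ρ (Ioo_subset_Ico_self hρ))
    (fun ρ hρ j hj ↦ hQ₁bd ρ hρ j (hj.trans (by norm_num))) hlam₁
    (hMlam ▸ kernel_normalization_ne_zero hlam_pos) k a₁ a₂ b₁ b₂ D hk ha₁ ha₂ hb₁ hb₂ hD
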